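/- arXiv:1804.10461 — 2 statements merged into one kernel-verified Lean document; each statement's English description precedes it below -/
import Mathlib

section
/- Let λ be a left-infinite word and ρ a right-infinite word over a finite alphabet A. Then for every natural number n, log_{λ,ρ}(n+1) ∈ {0, log_{λ,ρ}(n) + 1}. -/
/-- The suffix of length `n` of the left-infinite word `⋯ (lam 2)(lam 1)(lam 0)`. -/
def lSuffix {A : Type*} (lam : ℕ → A) (n : ℕ) : List A := (List.range n).reverse.map lam

/-- The prefix of length `n` of the right-infinite word `(rho 0)(rho 1)(rho 2) ⋯`. -/
def rPrefix {A : Type*} (rho : ℕ → A) (n : ℕ) : List A := (List.range n).map rho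

/-- The left overlap gap between two finite words. -/
noncomputable def logGap {A : Type*} (u v : List A) : ℕ :=
  sInf {n | ∃ x x' : List A, x.length = n ∧ x'.length = n ∧ u ++ x = x' ++ v}

/-- The right overlap gap between two finite words. -/
noncomputable def rogGap {A : Type*} (u v : List A) : ℕ :=
  sInf {n | ∃ x x' : List A, x.length = n ∧ x'.length = n ∧ x ++ u = v ++ x'}

/-- The overlap gap between two finite words. -/
noncomputable def ogGap {A : Type*} (u v : List A) : ℕ := min (logGap u v) (rogGap u v)

/-!
Let `u` be the suffix of `lam` and `v` the prefix of `rho` of length `n`. Passing from `n` to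
`n + 1` adds a letter `a` in front of `u` and a letter `b` at the end of `v`. In an equation
`a u x = x' v b` with `x` and `x'` nonempty, the word `x'` begins with `a` and the word `x` ends
with `b`; cancelling these letters gives an equation `u y = y' v` with `y` and `y'` one letter
shorter, and the passage is reversible. Hence the positive lengths that solve the first equation
are the successors of the lengths that solve the second one.
-/

/-- The length `k` solves the equation `u x = x' v` in words `x`, `x'` of length `k`, so that
`logGap u v` is the least such `k`. If `u` and `v` have different lengths, there is no such `k` and
`logGap u v` is the junk value `sInf ∅ = 0`. -/
def IsLogShift {A : Type*} (u v : List A) (k : ℕ) : Prop :=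
  ∃ x x' : List A, x.length = k ∧ x'.length = k ∧ u ++ x = x' ++ v

section

variable {A : Type*}

theorem logGap_eq_sInf (u v : List A) : logGap u v = sInf {k | IsLogShift u v k} := rfl

theorem IsLogShift.cons_concat {u v : List A} {k : ℕ} (h : IsLogShift u v k) (a b : A) :
    IsLogShift (a :: u) (v ++ [b]) (k + 1) := by
  obtain ⟨x, x', hx, hx', hux⟩ := h
  refine ⟨x ++ [b], a :: x', by simp [hx], by simp [hx'], ?_⟩
  calc (a :: u) ++ (x ++ [b]) = a :: (u ++ x) ++ [b] := by simp
    _ = a :: (x' ++ v) ++ [b] := by rw [hux]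
    _ = (a :: x') ++ (v ++ [b]) := by simp

theorem IsLogShift.of_cons_concat {u v : List A} {a b : A} {k : ℕ}
    (h : IsLogShift (a :: u) (v ++ [b]) (k + 1)) : IsLogShift u v k := by
  obtain ⟨x, x', hx, hx', hux⟩ := h
  obtain ⟨y, d, rfl⟩ := List.eq_nil_or_concat' x |>.resolve_left (by rintro rfl; simp at hx)
  obtain ⟨c, y', rfl⟩ := List.exists_cons_of_length_eq_add_one hx'
  have hcancel_first : u ++ (y ++ [d]) = y' ++ (v ++ [b]) := (List.cons.inj hux).2
  have hcancel_last : u ++ y = y' ++ v := by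
    rw [← List.append_assoc, ← List.append_assoc] at hcancel_first
    exact List.append_inj_left' hcancel_first rfl
  exact ⟨y, y', by simpa using hx, by simpa using hx', hcancel_last⟩

theorem isLogShift_cons_concat_succ_iff {u v : List A} {a b : A} {k : ℕ} :
    IsLogShift (a :: u) (v ++ [b]) (k + 1) ↔ IsLogShift u v k :=
  ⟨.of_cons_concat, fun h => h.cons_concat a b⟩

theorem logGap_cons_concat_eq_zero_or (u v : List A) (a b : A) :
    logGap (a :: u) (v ++ [b]) = 0 ∨ logGap (a :: u) (v ++ [b]) = logGap u v + 1 := by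
  refine (Nat.eq_zero_or_pos _).imp_right fun hpos => ?_
  calc logGap (a :: u) (v ++ [b])
      = sInf {k | IsLogShift (a :: u) (v ++ [b]) (k + 1)} + 1 := (Nat.sInf_add hpos).symm
    _ = logGap u v + 1 := by simp only [isLogShift_cons_concat_succ_iff, logGap_eq_sInf]

theorem lSuffix_succ (lam : ℕ → A) (n : ℕ) : lSuffix lam (n + 1) = lam n :: lSuffix lam n := by
  simp [lSuffix, List.range_succ]

theorem rPrefix_succ (rho : ℕ → A) (n : ℕ) : rPrefix rho (n + 1) = rPrefix rho n ++ [rho n] := by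
  simp [rPrefix, List.range_succ]

theorem log_succ_mem_general (lam rho : ℕ → A) (n : ℕ) :
    logGap (lSuffix lam (n + 1)) (rPrefix rho (n + 1)) = 0 ∨
      logGap (lSuffix lam (n + 1)) (rPrefix rho (n + 1)) =
        logGap (lSuffix lam n) (rPrefix rho n) + 1 := by
  rw [lSuffix_succ, rPrefix_succ]
  exact logGap_cons_concat_eq_zero_or (lSuffix lam n) (rPrefix rho n) (lam n) (rho n)

end

/-- For a left-infinite word `lam` and a right-infinite word `rho` over a finite
alphabet, `log(n+1) ∈ {0, log(n) + 1}`. -/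
theorem log_succ_mem {A : Type*} [Fintype A] [Nonempty A] (lam rho : ℕ → A) (n : ℕ) :
    logGap (lSuffix lam (n + 1)) (rPrefix rho (n + 1)) = 0 ∨
      logGap (lSuffix lam (n + 1)) (rPrefix rho (n + 1)) =
        logGap (lSuffix lam n) (rPrefix rho n) + 1 :=
  log_succ_mem_general lam rho n
end

section
/- Let λ be a left-infinite word and ρ a right-infinite word over a finite alphabet A. The set OG_{λ,ρ} = {og_{λ,ρ}(n) : n ∈ ℕ} is finite if and only if the set ROG_{λ,ρ} = {rog_{λ,ρ}(n) : n ∈ ℕ} is finite. -/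
/-!
Since `og ≤ rog`, only a bound on `rog` in terms of `og` is needed. Suppose `og ≤ K` and write
`λ_{n+K} = y λ_n`, `ρ_{n+K} = ρ_n z`, where `y` and `z` have length `K`. An overlap in which
`ρ_{n+K}` begins `r` letters before `λ_{n+K}` makes `ρ_n` begin `r + K` letters before `λ_n`. One
in which `ρ_{n+K}` begins `l ≤ K` letters after `λ_{n+K}` still makes `ρ_n` begin `K - l` letters
before `λ_n`. In either case `rog` is at most `2 * K` at `n`.
-/

section FiniteWords

variable {A : Type*} {u v : List A}

lemma logGap_spec (h : u.length = v.length) :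
    ∃ x x' : List A, x.length = logGap u v ∧ x'.length = logGap u v ∧ u ++ x = x' ++ v :=
  Nat.sInf_mem
    (s := {n | ∃ x x' : List A, x.length = n ∧ x'.length = n ∧ u ++ x = x' ++ v})
    ⟨u.length, v, u, h.symm, rfl, rfl⟩

lemma rogGap_spec (h : u.length = v.length) :
    ∃ x x' : List A, x.length = rogGap u v ∧ x'.length = rogGap u v ∧ x ++ u = v ++ x' :=
  Nat.sInf_mem
    (s := {n | ∃ x x' : List A, x.length = n ∧ x'.length = n ∧ x ++ u = v ++ x'})
    ⟨u.length, v, u, h.symm, rfl, rfl⟩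

lemma rogGap_le_length_of_append_eq {x x' : List A} (h : u.length = v.length)
    (heq : x ++ u = v ++ x') : rogGap u v ≤ x.length := by
  have hlen := congrArg List.length heq
  simp only [List.length_append] at hlen
  exact Nat.sInf_le ⟨x, x', rfl, by lia, heq⟩

lemma ogGap_le_rogGap (u v : List A) : ogGap u v ≤ rogGap u v :=
  min_le_right _ _

variable {y z : List A}

lemma rogGap_le_rogGap_append_add_length (huv : u.length = v.length)
    (hyz : y.length = z.length) :
    rogGap u v ≤ rogGap (y ++ u) (v ++ z) + y.length := by
  obtain ⟨x, x', hx, -, heq⟩ :=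
    rogGap_spec (u := y ++ u) (v := v ++ z) (by simp [huv, hyz, add_comm])
  have hshift : (x ++ y) ++ u = v ++ (z ++ x') := by
    simpa only [List.append_assoc] using heq
  simpa [hx] using rogGap_le_length_of_append_eq huv hshift

lemma rogGap_le_length_sub_logGap_append (huv : u.length = v.length)
    (hyz : y.length = z.length) (hlog : logGap (y ++ u) (v ++ z) ≤ y.length) :
    rogGap u v ≤ y.length - logGap (y ++ u) (v ++ z) := by
  obtain ⟨x, x', hx, hx', heq⟩ :=
    logGap_spec (u := y ++ u) (v := v ++ z) (by simp [huv, hyz, add_comm])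
  rw [List.append_assoc] at heq
  obtain ⟨w, rfl⟩ : x' <+: y :=
    List.prefix_of_prefix_length_le ⟨v ++ z, heq.symm⟩ ⟨u ++ x, rfl⟩ (by lia)
  have hwux : (w ++ u) ++ x = v ++ z := by simpa using heq
  obtain ⟨z', hz'⟩ : v <+: w ++ u :=
    List.prefix_of_prefix_length_le ⟨z, rfl⟩ ⟨x, hwux⟩ (by simp [huv])
  calc
    rogGap u v ≤ w.length := rogGap_le_length_of_append_eq huv hz'.symm
    _ = (x' ++ w).length - logGap ((x' ++ w) ++ u) (v ++ z) := by
      rw [← hx', List.length_append, Nat.add_sub_cancel_left]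

lemma rogGap_le_ogGap_append_add_length (huv : u.length = v.length)
    (hyz : y.length = z.length) (hog : ogGap (y ++ u) (v ++ z) ≤ y.length) :
    rogGap u v ≤ ogGap (y ++ u) (v ++ z) + y.length := by
  unfold ogGap at hog ⊢
  rcases min_choice (logGap (y ++ u) (v ++ z)) (rogGap (y ++ u) (v ++ z)) with hmin | hmin <;>
    rw [hmin] at hog ⊢
  · have hrog := rogGap_le_length_sub_logGap_append huv hyz hog
    lia
  · exact rogGap_le_rogGap_append_add_length huv hyz

end FiniteWords

section InfiniteWords

variable {A : Type*}

lemma length_lSuffix (lam : ℕ → A) (n : ℕ) : (lSuffix lam n).length = n := by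
  simp [lSuffix]

lemma length_rPrefix (rho : ℕ → A) (n : ℕ) : (rPrefix rho n).length = n := by
  simp [rPrefix]

lemma lSuffix_add (lam : ℕ → A) (n k : ℕ) :
    lSuffix lam (n + k) = lSuffix (fun i => lam (n + i)) k ++ lSuffix lam n := by
  simp [lSuffix, List.range_add, Function.comp_def]

lemma rPrefix_add (rho : ℕ → A) (n k : ℕ) :
    rPrefix rho (n + k) = rPrefix rho n ++ rPrefix (fun i => rho (n + i)) k := by
  simp [rPrefix, List.range_add, Function.comp_def]

lemma rogGap_le_ogGap_add (lam rho : ℕ → A) (n : ℕ) {k : ℕ}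
    (hog : ogGap (lSuffix lam (n + k)) (rPrefix rho (n + k)) ≤ k) :
    rogGap (lSuffix lam n) (rPrefix rho n) ≤
      ogGap (lSuffix lam (n + k)) (rPrefix rho (n + k)) + k := by
  rw [lSuffix_add, rPrefix_add] at hog ⊢
  simpa only [length_lSuffix] using
    rogGap_le_ogGap_append_add_length (by rw [length_lSuffix, length_rPrefix])
      (by rw [length_lSuffix, length_rPrefix]) (hog.trans_eq (length_lSuffix _ k).symm)

end InfiniteWords

theorem og_finite_iff_rog_finite_general {A : Type*} (lam rho : ℕ → A) :
    (Set.range fun n => ogGap (lSuffix lam n) (rPrefix rho n)).Finite ↔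
      (Set.range fun n => rogGap (lSuffix lam n) (rPrefix rho n)).Finite := by
  simp only [Set.finite_iff_bddAbove, bddAbove_def, Set.forall_mem_range]
  constructor
  · rintro ⟨K, hK⟩
    refine ⟨K + K, fun n => ?_⟩
    exact (rogGap_le_ogGap_add lam rho n (hK (n + K))).trans (Nat.add_le_add_right (hK _) K)
  · rintro ⟨K, hK⟩
    exact ⟨K, fun n => (ogGap_le_rogGap _ _).trans (hK n)⟩

/-- `OG` is finite iff `ROG` is finite. -/
theorem og_finite_iff_rog_finite {A : Type*} [Fintype A] [Nonempty A] (lam rho : ℕ → A) :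
    (Set.range fun n => ogGap (lSuffix lam n) (rPrefix rho n)).Finite ↔
      (Set.range fun n => rogGap (lSuffix lam n) (rPrefix rho n)).Finite :=
  og_finite_iff_rog_finite_general lam rho
end
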